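/- Let Xᵢ, X_{−i}, R_{−i}, M, Z, Π be discrete random variables with finite range on a common probability space, and write X = (Xᵢ, X_{−i}). Assume: (a) I(Xᵢ; (X_{−i}, R_{−i}) | M, Z) = 0 (Xᵢ is conditionally independent of (X_{−i}, R_{−i}) given (M, Z)); and (b) I(Π; (M, Z) | X, R_{−i}) = 0. Then I(Xᵢ; Π | M, Z) ≤ I(Xᵢ; Π | X_{−i}, R_{−i}). -/

import Mathlib

open Finset

noncomputable section

open Classical in
/-- Probability of an event under a probability mass function on a finite sample space. -/
def pr {Ω : Type*} [Fintype Ω] (p : Ω → ℝ) (E : Ω → Prop) : ℝ :=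
  ∑ ω ∈ Finset.univ.filter E, p ω

open Classical in
/-- Shannon entropy (in bits) of a discrete random variable on a finite sample space. -/
def entropy {Ω A : Type*} [Fintype Ω] (p : Ω → ℝ) (X : Ω → A) : ℝ :=
  -∑ a ∈ Finset.univ.image X,
    pr p (fun ω => X ω = a) * Real.logb 2 (pr p (fun ω => X ω = a))

open Classical in
/-- Conditional entropy `H(X | Y) = ∑_y Pr[Y=y] · H(X | Y=y)` (in bits). -/
def condEntropy {Ω A B : Type*} [Fintype Ω] (p : Ω → ℝ) (X : Ω → A) (Y : Ω → B) : ℝ :=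
  ∑ b ∈ Finset.univ.image Y,
    pr p (fun ω => Y ω = b) *
      (-∑ a ∈ Finset.univ.image X,
        (pr p (fun ω => X ω = a ∧ Y ω = b) / pr p (fun ω => Y ω = b)) *
          Real.logb 2
            (pr p (fun ω => X ω = a ∧ Y ω = b) / pr p (fun ω => Y ω = b)))

/-- Conditional mutual information `I(X;Y | Z) = H(X|Z) − H(X|Y,Z)` (in bits). -/
def condMutualInfo {Ω A B C : Type*} [Fintype Ω] (p : Ω → ℝ)
    (X : Ω → A) (Y : Ω → B) (Z : Ω → C) : ℝ :=
  condEntropy p X Z - condEntropy p X (fun ω => (Y ω, Z ω))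

/-!
Write `V = (X₋ᵢ, R₋ᵢ)` and `W = (M, Z)`. Expanding `I(X; T, V | W)` and `I(T; X, W | V)` by the
chain rule in both orders and discarding a nonnegative term from each gives
`I(X; T | W) ≤ I(X; V | W) + I(X; T | V, W)` and `I(X; T | V, W) ≤ I(X; T | V) + I(T; W | X, V)`.
The terms `I(X; V | W)` and `I(T; W | X, V)` are the ones that the independence assumptions make
zero.
-/

section

variable {ι A B C D : Type*} [Fintype ι] {p : ι → ℝ}

/-- Gibbs' inequality, with `r` the ratio of the two densities being compared. -/
theorem sum_mul_logb_nonpos {b : ℝ} (hb : 1 < b) {r : ι → ℝ} (hp : ∀ i, 0 ≤ p i)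
    (hr : ∀ i, 0 < p i → 0 < r i) (h : ∑ i, p i * r i ≤ ∑ i, p i) :
    ∑ i, p i * Real.logb b (r i) ≤ 0 := by
  have hlog : ∑ i, p i * Real.log (r i) ≤ 0 := calc
    ∑ i, p i * Real.log (r i) ≤ ∑ i, p i * (r i - 1) := by
      refine sum_le_sum fun i _ => ?_
      rcases (hp i).eq_or_lt with hi | hi
      · simp [← hi]
      · exact mul_le_mul_of_nonneg_left (Real.log_le_sub_one_of_pos (hr i hi)) hi.le
    _ = ∑ i, p i * r i - ∑ i, p i := by simp only [mul_sub, mul_one, sum_sub_distrib]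
    _ ≤ 0 := sub_nonpos.2 h
  simp only [Real.logb, ← mul_div_assoc, ← sum_div]
  exact div_nonpos_of_nonpos_of_nonneg hlog (Real.log_pos hb).le

theorem pr_nonneg (hp : ∀ i, 0 ≤ p i) (P : ι → Prop) : 0 ≤ pr p P :=
  sum_nonneg fun i _ => hp i

theorem pr_mono (hp : ∀ i, 0 ≤ p i) {P Q : ι → Prop} (h : ∀ i, P i → Q i) : pr p P ≤ pr p Q := by
  classical
  exact sum_le_sum_of_subset_of_nonneg (monotone_filter_right _ fun i _ => h i) fun i _ _ => hp i

theorem pr_pos (hp : ∀ i, 0 ≤ p i) {P : ι → Prop} {i : ι} (hi : 0 < p i) (hP : P i) :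
    0 < pr p P := by
  classical
  exact hi.trans_le (single_le_sum (fun j _ => hp j) (by simpa using hP))

theorem sum_pr_and (X : ι → A) (P : ι → Prop) {s : Finset A} (hs : ∀ i, X i ∈ s) :
    ∑ a ∈ s, pr p (fun i => X i = a ∧ P i) = pr p P := by
  classical
  simp only [pr, and_comm, ← filter_filter]
  exact sum_fiberwise_of_maps_to (fun i _ => hs i) p

theorem sum_pr_mul (X : ι → A) {s : Finset A} (hs : ∀ i, X i ∈ s) (g : A → ℝ) :
    ∑ a ∈ s, pr p (fun i => X i = a) * g a = ∑ i, p i * g (X i) := by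
  classical
  rw [← sum_fiberwise_of_maps_to fun i _ => hs i]
  refine sum_congr rfl fun a _ => ?_
  rw [pr, sum_mul]
  exact sum_congr rfl fun i hi => by rw [(mem_filter.1 hi).2]

theorem condEntropy_eq_neg_sum (hp : ∀ i, 0 ≤ p i) (X : ι → A) (Y : ι → B) :
    condEntropy p X Y =
      -∑ i, p i * Real.logb 2
        (pr p (fun j => X j = X i ∧ Y j = Y i) / pr p fun j => Y j = Y i) := by
  classical
  have cancel (a : A) (b : B) : pr p (fun j => Y j = b) *
      (pr p (fun j => X j = a ∧ Y j = b) / pr p fun j => Y j = b) =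
        pr p fun j => X j = a ∧ Y j = b :=
    mul_div_cancel_of_imp' fun h =>
      le_antisymm (h ▸ pr_mono hp fun _ => And.right) (pr_nonneg hp _)
  have hs (i : ι) : (X i, Y i) ∈ univ.image X ×ˢ univ.image Y := by simp
  rw [← sum_pr_mul (fun i => (X i, Y i)) hs fun c =>
    Real.logb 2 (pr p (fun j => X j = c.1 ∧ Y j = c.2) / pr p fun j => Y j = c.2)]
  simp only [condEntropy, mul_neg, mul_sum, ← mul_assoc, cancel, sum_neg_distrib, sum_product_right,
    Prod.mk.injEq]

theorem condEntropy_congr_right (hp : ∀ i, 0 ≤ p i) (X : ι → A) {Y : ι → B} {Y' : ι → C}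
    (h : ∀ i j, Y i = Y j ↔ Y' i = Y' j) : condEntropy p X Y = condEntropy p X Y' := by
  simp only [condEntropy_eq_neg_sum hp, h]

theorem condMutualInfo_eq_neg_sum (hp : ∀ i, 0 ≤ p i) (X : ι → A) (Y : ι → B) (Z : ι → C) :
    condMutualInfo p X Y Z =
      -∑ i, p i * Real.logb 2
        (pr p (fun j => X j = X i ∧ Z j = Z i) * pr p (fun j => Y j = Y i ∧ Z j = Z i) /
          (pr p (fun j => X j = X i ∧ Y j = Y i ∧ Z j = Z i) * pr p fun j => Z j = Z i)) := by
  rw [condMutualInfo, condEntropy_eq_neg_sum hp, condEntropy_eq_neg_sum hp, neg_sub_neg,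
    ← sum_sub_distrib, ← sum_neg_distrib]
  refine sum_congr rfl fun i _ => ?_
  rcases (hp i).eq_or_lt with hi | hi
  · simp [← hi]
  · have hxz : 0 < pr p fun j => X j = X i ∧ Z j = Z i := pr_pos hp hi ⟨rfl, rfl⟩
    have hyz : 0 < pr p fun j => Y j = Y i ∧ Z j = Z i := pr_pos hp hi ⟨rfl, rfl⟩
    have hxyz : 0 < pr p fun j => X j = X i ∧ Y j = Y i ∧ Z j = Z i :=
      pr_pos hp hi ⟨rfl, rfl, rfl⟩
    have hz : 0 < pr p fun j => Z j = Z i := pr_pos hp hi rfl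
    simp only [Prod.mk.injEq]
    rw [Real.logb_div hxyz.ne' hyz.ne', Real.logb_div hxz.ne' hz.ne',
      Real.logb_div (mul_pos hxz hyz).ne' (mul_pos hxyz hz).ne', Real.logb_mul hxz.ne' hyz.ne',
      Real.logb_mul hxyz.ne' hz.ne']
    ring

theorem condMutualInfo_comm (hp : ∀ i, 0 ≤ p i) (X : ι → A) (Y : ι → B) (Z : ι → C) :
    condMutualInfo p X Y Z = condMutualInfo p Y X Z := by
  simp only [condMutualInfo_eq_neg_sum hp, mul_comm, and_left_comm]

theorem condMutualInfo_congr_right (hp : ∀ i, 0 ≤ p i) (X : ι → A) (Y : ι → B) {Z : ι → C}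
    {Z' : ι → D} (h : ∀ i j, Z i = Z j ↔ Z' i = Z' j) :
    condMutualInfo p X Y Z = condMutualInfo p X Y Z' := by
  simp only [condMutualInfo_eq_neg_sum hp, h]

/-- The summand is the joint law that makes `X` and `Y` conditionally independent given `Z` while
keeping the laws of `(X, Z)` and `(Y, Z)`. -/
theorem sum_pr_mul_pr_div (X : ι → A) (Y : ι → B) (Z : ι → C) {s : Finset A} {t : Finset B}
    {u : Finset C} (hs : ∀ i, X i ∈ s) (ht : ∀ i, Y i ∈ t) (hu : ∀ i, Z i ∈ u) :
    ∑ c ∈ u, ∑ a ∈ s, ∑ b ∈ t,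
      pr p (fun i => X i = a ∧ Z i = c) * pr p (fun i => Y i = b ∧ Z i = c) /
        pr p (fun i => Z i = c) = ∑ i, p i := by
  simp only [← sum_div, ← sum_mul_sum, sum_pr_and X _ hs, sum_pr_and Y _ ht, mul_self_div_self]
  simpa only [mul_one] using sum_pr_mul Z hu fun _ => 1

theorem sum_mul_pr_mul_pr_div_le (hp : ∀ i, 0 ≤ p i) (X : ι → A) (Y : ι → B) (Z : ι → C) :
    ∑ i, p i * (pr p (fun j => X j = X i ∧ Z j = Z i) * pr p (fun j => Y j = Y i ∧ Z j = Z i) /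
      (pr p (fun j => X j = X i ∧ Y j = Y i ∧ Z j = Z i) * pr p fun j => Z j = Z i)) ≤
      ∑ i, p i := by
  classical
  let xyz (a : A) (b : B) (c : C) : ℝ := pr p fun j => X j = a ∧ Y j = b ∧ Z j = c
  let xz (a : A) (c : C) : ℝ := pr p fun j => X j = a ∧ Z j = c
  let yz (b : B) (c : C) : ℝ := pr p fun j => Y j = b ∧ Z j = c
  let z (c : C) : ℝ := pr p fun j => Z j = c
  have hs (i : ι) : ((X i, Y i), Z i) ∈ (univ.image X ×ˢ univ.image Y) ×ˢ univ.image Z := by simp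
  -- Not an equality: where `xyz a b c = 0`, the left-hand side is `0` but the right need not be.
  have cancel (a : A) (b : B) (c : C) :
      xyz a b c * (xz a c * yz b c / (xyz a b c * z c)) ≤ xz a c * yz b c / z c := by
    have hnonneg : 0 ≤ xz a c * yz b c / z c :=
      div_nonneg (mul_nonneg (pr_nonneg hp _) (pr_nonneg hp _)) (pr_nonneg hp _)
    calc
      _ = xz a c * yz b c / z c * (xyz a b c / xyz a b c) := by ring
      _ ≤ _ := mul_le_of_le_one_right hnonneg (div_self_le_one _)
  calc
    _ = ∑ c ∈ univ.image Z, ∑ a ∈ univ.image X, ∑ b ∈ univ.image Y,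
          xyz a b c * (xz a c * yz b c / (xyz a b c * z c)) := by
      rw [← sum_pr_mul (fun i => ((X i, Y i), Z i)) hs fun t =>
        xz t.1.1 t.2 * yz t.1.2 t.2 / (xyz t.1.1 t.1.2 t.2 * z t.2),
        sum_product_right]
      simp only [sum_product, Prod.mk.injEq, and_assoc, xyz]
    _ ≤ ∑ c ∈ univ.image Z, ∑ a ∈ univ.image X, ∑ b ∈ univ.image Y, xz a c * yz b c / z c :=
      sum_le_sum fun c _ => sum_le_sum fun a _ => sum_le_sum fun b _ => cancel a b c
    _ = ∑ i, p i := sum_pr_mul_pr_div X Y Z (by simp) (by simp) (by simp)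

theorem condMutualInfo_nonneg (hp : ∀ i, 0 ≤ p i) (X : ι → A) (Y : ι → B) (Z : ι → C) :
    0 ≤ condMutualInfo p X Y Z := by
  rw [condMutualInfo_eq_neg_sum hp, neg_nonneg]
  refine sum_mul_logb_nonpos one_lt_two hp (fun i hi => ?_) (sum_mul_pr_mul_pr_div_le hp X Y Z)
  exact div_pos (mul_pos (pr_pos hp hi ⟨rfl, rfl⟩) (pr_pos hp hi ⟨rfl, rfl⟩))
    (mul_pos (pr_pos hp hi ⟨rfl, rfl, rfl⟩) (pr_pos hp hi rfl))

/-- Both sides are chain-rule expansions of `I(X; Y, W | Z)`. -/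
theorem condMutualInfo_add_comm (hp : ∀ i, 0 ≤ p i) (X : ι → A) (Y : ι → B) (W : ι → D)
    (Z : ι → C) :
    condMutualInfo p X Y Z + condMutualInfo p X W (fun i => (Y i, Z i)) =
      condMutualInfo p X W Z + condMutualInfo p X Y (fun i => (W i, Z i)) := by
  simp only [condMutualInfo]
  rw [condEntropy_congr_right hp X (Y := fun i => (W i, Y i, Z i))
    (Y' := fun i => (Y i, W i, Z i)) fun i j => by simp only [Prod.mk.injEq, and_left_comm]]
  ring

theorem smic_le_mic_second_half_general (hp : ∀ i, 0 ≤ p i) (X : ι → A) (V : ι → B) (W : ι → C)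
    (T : ι → D) :
    condMutualInfo p X T W ≤
      condMutualInfo p X V W + condMutualInfo p T W (fun i => (X i, V i)) +
        condMutualInfo p X T V := by
  have hW : condMutualInfo p X T W ≤
      condMutualInfo p X V W + condMutualInfo p X T (fun i => (V i, W i)) := by
    rw [condMutualInfo_add_comm hp]
    exact le_add_of_nonneg_right (condMutualInfo_nonneg hp _ _ _)
  have hV : condMutualInfo p T X (fun i => (W i, V i)) ≤
      condMutualInfo p T X V + condMutualInfo p T W (fun i => (X i, V i)) := by
    rw [condMutualInfo_add_comm hp]
    exact le_add_of_nonneg_left (condMutualInfo_nonneg hp _ _ _)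
  have hVW : condMutualInfo p X T (fun i => (V i, W i)) =
      condMutualInfo p T X (fun i => (W i, V i)) := by
    rw [condMutualInfo_comm hp]
    exact condMutualInfo_congr_right hp T X fun i j => by simp only [Prod.mk.injEq, and_comm]
  linarith [condMutualInfo_comm hp T X V]

end

/-- Second half of `SMIC ≤ MIC`: if `Xᵢ` is conditionally independent of
`(X₋ᵢ, R₋ᵢ)` given `(M, Z)`, and `I(Tr; (M,Z) | X R₋ᵢ) = 0` where
`X = (Xᵢ, X₋ᵢ)`, then `I(Xᵢ; Tr | M Z) ≤ I(Xᵢ; Tr | X₋ᵢ R₋ᵢ)`. -/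
theorem smic_le_mic_second_half {Ω α α' β' γ δ ε' : Type*} [Fintype Ω]
    (p : Ω → ℝ) (hp : ∀ ω, 0 ≤ p ω) (hsum : ∑ ω, p ω = 1)
    (Xi : Ω → α) (Xmi : Ω → α') (Rmi : Ω → β')
    (M : Ω → γ) (Z : Ω → δ) (Tr : Ω → ε')
    (ha : condMutualInfo p Xi (fun ω => (Xmi ω, Rmi ω)) (fun ω => (M ω, Z ω)) = 0)
    (hb : condMutualInfo p Tr (fun ω => (M ω, Z ω))
        (fun ω => ((Xi ω, Xmi ω), Rmi ω)) = 0) :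
    condMutualInfo p Xi Tr (fun ω => (M ω, Z ω)) ≤
      condMutualInfo p Xi Tr (fun ω => (Xmi ω, Rmi ω)) := by
  rw [condMutualInfo_congr_right hp _ _ (Z' := fun ω => (Xi ω, Xmi ω, Rmi ω)) fun _ _ => by
    simp only [Prod.mk.injEq, and_assoc]] at hb
  simpa only [ha, hb, zero_add] using
    smic_le_mic_second_half_general hp Xi (fun ω => (Xmi ω, Rmi ω)) (fun ω => (M ω, Z ω)) Tr
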